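/- Let A be an n × n matrix over ZMod 2, b ∈ (Fin n → ZMod 2), and f(x) = xᵀ A x + ⟨b, x⟩. If the rank of A + Aᵀ over ZMod 2 is at least n/4, then for every linear function g (i.e. g(x) = ⟨c, x⟩ for some c), the agreement d(f,g) is at most 2^(−n/8). -/

import Mathlib

/-!
Write `q = f + g`, a quadratic form plus a linear form over `ZMod 2`, let `χ` be the nontrivial
`±1`-valued additive character of `ZMod 2`, and let `S = ∑ x, χ (q x)`, so that
`agreement f g = |S| / 2 ^ n`. The proof is the usual squaring argument. Since
`q x + q (x + h) = q h + ⟨x, (A + Aᵀ) h⟩` (`quad_add`),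
`S ^ 2 = ∑ h, χ (q h) * ∑ x, χ ⟨x, (A + Aᵀ) h⟩`, and by orthogonality of characters
(`sum_sgn_dotProduct`) the inner sum is `2 ^ n` if `(A + Aᵀ) h = 0` and `0` otherwise. Hence
`S ^ 2 ≤ 2 ^ n * |ker (A + Aᵀ)| = 2 ^ n * 2 ^ (n - r)` with `r = rank (A + Aᵀ)`, that is
`(|S| / 2 ^ n) ^ 2 ≤ 2 ^ (-r) ≤ 2 ^ (-n / 4)`.
-/

open Matrix

/-- The agreement `d(f,g) = |P_x[f(x)=g(x)] − P_x[f(x)≠g(x)]|` for uniform `x`. -/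
noncomputable def agreement {n : ℕ} (f g : (Fin n → ZMod 2) → ZMod 2) : ℝ :=
  |((Finset.univ.filter (fun x => f x = g x)).card : ℝ)
    - ((Finset.univ.filter (fun x => f x ≠ g x)).card : ℝ)| / 2 ^ n

/-- The nontrivial additive character `z ↦ (-1) ^ z` of `ZMod 2`, with real values. -/
def sgn (z : ZMod 2) : ℝ := if z = 0 then 1 else -1

lemma sgn_add (a b : ZMod 2) : sgn (a + b) = sgn a * sgn b := by
  have key : ∀ a b : ZMod 2, (a + b = 0) ↔ (a = 0 ↔ b = 0) := by decide
  unfold sgn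
  by_cases ha : a = 0 <;> by_cases hb : b = 0 <;> simp [key, ha, hb]

lemma sgn_le_one (a : ZMod 2) : sgn a ≤ 1 := by
  unfold sgn
  split_ifs <;> norm_num

lemma sum_sgn_dotProduct {n : ℕ} (v : Fin n → ZMod 2) :
    ∑ x : Fin n → ZMod 2, sgn (x ⬝ᵥ v) = if v = 0 then 2 ^ n else 0 := by
  split_ifs with hv
  · simp [hv, sgn, ZMod.card]
  · obtain ⟨i, hi⟩ := Function.ne_iff.mp hv
    have h1 : v i = 1 := by
      have : ∀ a : ZMod 2, a ≠ 0 → a = 1 := by decide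
      exact this _ hi
    -- Translating by the `i`-th basis vector flips the sign of every term.
    have h := Equiv.sum_comp (Equiv.addRight (Pi.single i (1 : ZMod 2)))
      (fun x : Fin n → ZMod 2 => sgn (x ⬝ᵥ v))
    have h2 : sgn 1 = -1 := by simp [sgn]
    simp only [Equiv.coe_addRight, add_dotProduct, single_dotProduct, h1, sgn_add, mul_one,
      h2, mul_neg, Finset.sum_neg_distrib] at h
    linarith

/-- The polarization identity in characteristic two. -/
lemma quad_add {n : ℕ} (A : Matrix (Fin n) (Fin n) (ZMod 2)) (d x h : Fin n → ZMod 2) :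
    (x ⬝ᵥ A *ᵥ x + d ⬝ᵥ x) + ((x + h) ⬝ᵥ A *ᵥ (x + h) + d ⬝ᵥ (x + h))
      = (h ⬝ᵥ A *ᵥ h + d ⬝ᵥ h) + x ⬝ᵥ (A + Aᵀ) *ᵥ h := by
  have ht : x ⬝ᵥ Aᵀ *ᵥ h = h ⬝ᵥ A *ᵥ x := by
    rw [mulVec_transpose, dotProduct_comm, dotProduct_mulVec]
  simp only [mulVec_add, add_mulVec, dotProduct_add, add_dotProduct, ht]
  have h1 := CharTwo.add_self_eq_zero (x ⬝ᵥ A *ᵥ x)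
  have h2 := CharTwo.add_self_eq_zero (d ⬝ᵥ x)
  linear_combination h1 + h2

lemma card_ker {n : ℕ} (M : Matrix (Fin n) (Fin n) (ZMod 2)) :
    (Finset.univ.filter (fun h : Fin n → ZMod 2 => M *ᵥ h = 0)).card * 2 ^ M.rank = 2 ^ n := by
  classical
  have : Fintype (LinearMap.ker M.mulVecLin) := Fintype.ofFinite _
  have h1 := LinearMap.finrank_range_add_finrank_ker M.mulVecLin
  have h2 := Module.card_eq_pow_finrank (K := ZMod 2) (V := LinearMap.ker M.mulVecLin)
  have h3 : (Finset.univ.filter (fun h : Fin n → ZMod 2 => M *ᵥ h = 0)).card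
      = Fintype.card (LinearMap.ker M.mulVecLin) := by
    rw [← Fintype.card_subtype]
    exact Fintype.card_congr (Equiv.subtypeEquivRight fun h => by simp)
  rw [h3, h2, ZMod.card, ← pow_add, Matrix.rank, add_comm, h1]
  simp

lemma sq_sum_sgn_quad_le {n : ℕ} (A : Matrix (Fin n) (Fin n) (ZMod 2)) (d : Fin n → ZMod 2) :
    (∑ x : Fin n → ZMod 2, sgn (x ⬝ᵥ A *ᵥ x + d ⬝ᵥ x)) ^ 2 * 2 ^ (A + Aᵀ).rank
      ≤ (2 ^ n) ^ 2 := by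
  have h1 : (∑ x : Fin n → ZMod 2, sgn (x ⬝ᵥ A *ᵥ x + d ⬝ᵥ x)) ^ 2
      = ∑ h : Fin n → ZMod 2, sgn (h ⬝ᵥ A *ᵥ h + d ⬝ᵥ h) *
        (if (A + Aᵀ) *ᵥ h = 0 then 2 ^ n else 0) := by
    simp only [← sum_sgn_dotProduct, Finset.mul_sum, ← sgn_add, ← quad_add]
    rw [sq, Finset.sum_mul_sum]
    conv_rhs => rw [Finset.sum_comm]
    refine Finset.sum_congr rfl fun x _ => ?_
    rw [← Equiv.sum_comp (Equiv.addLeft x)]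
    exact Finset.sum_congr rfl fun h _ => (sgn_add _ _).symm
  have h2 : (∑ x : Fin n → ZMod 2, sgn (x ⬝ᵥ A *ᵥ x + d ⬝ᵥ x)) ^ 2
      ≤ (Finset.univ.filter (fun h : Fin n → ZMod 2 => (A + Aᵀ) *ᵥ h = 0)).card * 2 ^ n := by
    rw [h1, ← nsmul_eq_mul, ← Finset.sum_const, Finset.sum_filter]
    refine Finset.sum_le_sum fun h _ => ?_
    split_ifs
    · exact mul_le_of_le_one_left (by positivity) (sgn_le_one _)
    · simp
  have h3 : ((Finset.univ.filter (fun h : Fin n → ZMod 2 => (A + Aᵀ) *ᵥ h = 0)).card : ℝ)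
      * 2 ^ (A + Aᵀ).rank = 2 ^ n := by exact_mod_cast card_ker (A + Aᵀ)
  calc _ ≤ _ * 2 ^ (A + Aᵀ).rank := mul_le_mul_of_nonneg_right h2 (by positivity)
    _ = (2 ^ n) ^ 2 := by rw [mul_right_comm, h3, sq]

lemma agreement_eq {n : ℕ} (f g : (Fin n → ZMod 2) → ZMod 2) :
    agreement f g = |∑ x, sgn (f x + g x)| / 2 ^ n := by
  unfold agreement sgn
  simp only [CharTwo.add_eq_zero, Finset.sum_ite, Finset.sum_const, nsmul_eq_mul, mul_one,
    mul_neg, sub_eq_add_neg, ne_eq]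

theorem high_rank_quadratic_far_from_linear {n : ℕ}
    (A : Matrix (Fin n) (Fin n) (ZMod 2)) (b : Fin n → ZMod 2)
    (f : (Fin n → ZMod 2) → ZMod 2)
    (hf : ∀ x, f x = (∑ i, ∑ j, A i j * x i * x j) + ∑ i, b i * x i)
    (hrank : ((A + Aᵀ).rank : ℝ) ≥ (n : ℝ) / 4) :
    ∀ g : (Fin n → ZMod 2) → ZMod 2,
      (∃ c : Fin n → ZMod 2, ∀ x, g x = ∑ i, c i * x i) →
      agreement f g ≤ (2 : ℝ) ^ (-(n : ℝ) / 8) := by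
  rintro g ⟨c, hg⟩
  have hq : ∀ x, f x + g x = x ⬝ᵥ A *ᵥ x + (b + c) ⬝ᵥ x := by
    intro x
    rw [hf, hg, add_dotProduct, ← add_assoc]
    congr 2
    simp only [dotProduct, mulVec, Finset.mul_sum]
    exact Finset.sum_congr rfl fun i _ => Finset.sum_congr rfl fun j _ => by ring
  have hS := sq_sum_sgn_quad_le A (b + c)
  rw [agreement_eq]
  simp only [hq]
  refine abs_le_of_sq_le_sq' ?_ (by positivity) |>.2
  have hsq : ((2 : ℝ) ^ (-(n : ℝ) / 8)) ^ 2 = 2 ^ (-((n : ℝ) / 4)) := by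
    rw [← Real.rpow_natCast, ← Real.rpow_mul (by norm_num)]
    congr 1
    push_cast
    ring
  have hr : ((2 : ℝ) ^ (A + Aᵀ).rank)⁻¹ ≤ 2 ^ (-((n : ℝ) / 4)) := by
    rw [← Real.rpow_natCast, ← Real.rpow_neg (by norm_num)]
    exact Real.rpow_le_rpow_of_exponent_le (by norm_num) (by linarith)
  rw [hsq, div_pow, sq_abs]
  refine le_trans ?_ hr
  rw [div_le_iff₀ (by positivity), inv_mul_eq_div, le_div_iff₀ (by positivity)]
  exact hS
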